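/- The set of (equivalence classes of) functions of the form x ↦ P(x) · exp(−x²/4), where P ranges over all polynomials with complex coefficients, is dense in L²(ℝ, ℂ) (with respect to Lebesgue measure and the L² norm). -/

import Mathlib

/-!
Let `ω` be the weight, here `exp (-x² / 4)`, and let `f` be orthogonal to every `xⁿ ω(x)`, so that
all moments of `g = conj(ω) f` vanish. Since `ω` decays exponentially in the `L²` sense,
`exp (r |x|) g` is integrable for some `r > 0`. Expanding `exp (z x)` in a power series shows that
the moments of `exp (z x) g` vanish as well for `‖z‖ < r`. For imaginary `z` the factor `exp (z x)`
does not change `|g|`, so this step can be repeated with the same `r`, and the Fourier transform of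
`g` vanishes on the whole line, not only on `|t| < r`. Hence `g = 0`, and `f = 0` as `ω ≠ 0` almost
everywhere.
-/

open MeasureTheory
open scoped ComplexConjugate InnerProductSpace Nat

section FourierUniqueness

variable {E : Type*} [NormedAddCommGroup E] [InnerProductSpace ℝ E] [MeasurableSpace E]
  {μ : Measure E}

theorem charFun_withDensity_ofReal {h : E → ℝ} (hh : AEMeasurable h μ) (t : E) :
    charFun (μ.withDensity fun x => ENNReal.ofReal (h x)) t =
      ∫ x, Complex.exp (⟪x, t⟫_ℝ * Complex.I) * (max (h x) 0 : ℝ) ∂μ := by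
  rw [charFun_apply, integral_withDensity_eq_integral_toReal_smul₀ hh.ennreal_ofReal
    (ae_of_all _ fun _ => ENNReal.ofReal_lt_top)]
  simp only [ENNReal.toReal_ofReal', Complex.real_smul, mul_comm]

variable [BorelSpace E]

theorem integrable_cexp_inner_mul_I_mul {g : E → ℂ} (hg : Integrable g μ) (t : E) :
    Integrable (fun x => Complex.exp (⟪x, t⟫_ℝ * Complex.I) * g x) μ :=
  hg.bdd_mul (c := 1) (by fun_prop : Continuous _).aestronglyMeasurable
    (ae_of_all _ fun x => (Complex.norm_exp_ofReal_mul_I _).le)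

variable [CompleteSpace E] [SecondCountableTopology E]

theorem ae_eq_zero_of_integral_cexp_inner_mul_ofReal_eq_zero {h : E → ℝ} (hh : Integrable h μ)
    (hF : ∀ t, ∫ x, Complex.exp (⟪x, t⟫_ℝ * Complex.I) * h x ∂μ = 0) : h =ᵐ[μ] 0 := by
  have := isFiniteMeasure_withDensity_ofReal hh.2
  have : IsFiniteMeasure (μ.withDensity fun x => ENNReal.ofReal (-h x)) :=
    isFiniteMeasure_withDensity_ofReal hh.neg.2
  have neg_aemeasurable : AEMeasurable (fun x => -h x) μ := hh.aemeasurable.neg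
  have charFun_eq : charFun (μ.withDensity fun x => ENNReal.ofReal (h x)) =
      charFun (μ.withDensity fun x => ENNReal.ofReal (-h x)) := by
    funext t
    have pos_integrable : Integrable (fun x => ((max (h x) 0 : ℝ) : ℂ)) μ := hh.pos_part.ofReal
    have neg_integrable : Integrable (fun x => ((max (-h x) 0 : ℝ) : ℂ)) μ := hh.neg_part.ofReal
    rw [charFun_withDensity_ofReal hh.aemeasurable, charFun_withDensity_ofReal neg_aemeasurable,
      ← sub_eq_zero, ← integral_sub (integrable_cexp_inner_mul_I_mul pos_integrable t)
        (integrable_cexp_inner_mul_I_mul neg_integrable t), ← hF t]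
    simp only [← mul_sub, ← Complex.ofReal_sub, max_zero_sub_max_neg_zero_eq_self]
  have density_eq := (withDensity_eq_iff hh.aemeasurable.ennreal_ofReal
    neg_aemeasurable.ennreal_ofReal hh.lintegral_lt_top.ne).1 (Measure.ext_of_charFun charFun_eq)
  filter_upwards [density_eq] with x hx
  have parts_eq := congrArg ENNReal.toReal hx
  simp only [ENNReal.toReal_ofReal'] at parts_eq
  rw [Pi.zero_apply, ← max_zero_sub_max_neg_zero_eq_self (h x), parts_eq, sub_self]

theorem ae_re_eq_zero_of_integral_cexp_inner_mul_eq_zero {g : E → ℂ} (hg : Integrable g μ)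
    (hF : ∀ t, ∫ x, Complex.exp (⟪x, t⟫_ℝ * Complex.I) * g x ∂μ = 0) :
    (fun x => (g x).re) =ᵐ[μ] 0 := by
  refine ae_eq_zero_of_integral_cexp_inner_mul_ofReal_eq_zero hg.re fun t => ?_
  have hF_conj : ∫ x, Complex.exp (⟪x, t⟫_ℝ * Complex.I) * conj (g x) ∂μ = 0 := by
    have h := congrArg conj (hF (-t))
    rw [← integral_conj] at h
    simpa [← Complex.exp_conj] using h
  have hg_conj : Integrable (fun x => conj (g x)) μ :=
    (LinearIsometryEquiv.integrable_comp_iff Complex.conjLIE).2 hg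
  calc ∫ x, Complex.exp (⟪x, t⟫_ℝ * Complex.I) * ((g x).re : ℝ) ∂μ
      = ∫ x, (Complex.exp (⟪x, t⟫_ℝ * Complex.I) * g x +
          Complex.exp (⟪x, t⟫_ℝ * Complex.I) * conj (g x)) / 2 ∂μ := by
        simp only [Complex.re_eq_add_conj, ← mul_add, mul_div_assoc]
    _ = 0 := by
        rw [integral_div, integral_add (integrable_cexp_inner_mul_I_mul hg t)
          (integrable_cexp_inner_mul_I_mul hg_conj t), hF, hF_conj, add_zero, zero_div]

theorem ae_eq_zero_of_integral_cexp_inner_mul_eq_zero {g : E → ℂ} (hg : Integrable g μ)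
    (hF : ∀ t, ∫ x, Complex.exp (⟪x, t⟫_ℝ * Complex.I) * g x ∂μ = 0) : g =ᵐ[μ] 0 := by
  have hF_I : ∀ t, ∫ x, Complex.exp (⟪x, t⟫_ℝ * Complex.I) * (Complex.I * g x) ∂μ = 0 := fun t => by
    simp only [mul_left_comm _ Complex.I, integral_const_mul, hF, mul_zero]
  filter_upwards [ae_re_eq_zero_of_integral_cexp_inner_mul_eq_zero hg hF,
    ae_re_eq_zero_of_integral_cexp_inner_mul_eq_zero (hg.const_mul Complex.I) hF_I] with x hre him
  exact Complex.ext hre (by simpa using him)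

end FourierUniqueness

section ExponentialMoments

variable {μ : Measure ℝ} {g : ℝ → ℂ} {r : ℝ}

theorem pow_mul_exp_neg_mul_le {c y : ℝ} (hc : 0 < c) (hy : 0 ≤ y) (n : ℕ) :
    y ^ n * Real.exp (-(c * y)) ≤ n ! / c ^ n := by
  have h := Real.pow_div_factorial_le_exp (c * y) (by positivity) n
  rw [div_le_iff₀ (by positivity), mul_pow] at h
  rw [Real.exp_neg, ← div_eq_mul_inv, div_le_div_iff₀ (by positivity) (by positivity)]
  linarith

theorem memLp_exp_mul_abs_smul_pow_mul {p : ENNReal} {s : ℝ} (hsr : s < r)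
    (hg : MemLp (fun x => Real.exp (r * |x|) • g x) p μ) (n : ℕ) :
    MemLp (fun x => Real.exp (s * |x|) • ((x : ℂ) ^ n * g x)) p μ := by
  have factor : (fun x => Real.exp (s * |x|) • ((x : ℂ) ^ n * g x)) =
      fun x => ((x ^ n * Real.exp (-((r - s) * |x|)) : ℝ) : ℂ) * Real.exp (r * |x|) • g x := by
    funext x
    have hexp : Real.exp (s * |x|) = Real.exp (-((r - s) * |x|)) * Real.exp (r * |x|) := by
      rw [← Real.exp_add]
      ring_nf
    simp only [hexp, Complex.real_smul]
    push_cast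
    ring
  rw [factor]
  refine hg.of_le_mul (c := n ! / (r - s) ^ n)
    ((by fun_prop : Continuous _).aestronglyMeasurable.mul hg.1) (ae_of_all _ fun x => ?_)
  rw [norm_mul, Complex.norm_real, norm_mul, norm_pow, Real.norm_eq_abs, Real.norm_eq_abs,
    Real.abs_exp]
  gcongr
  exact pow_mul_exp_neg_mul_le (sub_pos.2 hsr) (abs_nonneg x) n

theorem memLp_pow_mul_of_exp_mul_abs_smul {p : ENNReal} (hr : 0 < r)
    (hg : MemLp (fun x => Real.exp (r * |x|) • g x) p μ) (n : ℕ) :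
    MemLp (fun x : ℝ => (x : ℂ) ^ n * g x) p μ := by
  simpa using memLp_exp_mul_abs_smul_pow_mul hr hg n

theorem hasSum_integral_pow_mul (hg : Integrable (fun x => Real.exp (r * |x|) • g x) μ) {z : ℂ}
    (hz : ‖z‖ ≤ r) :
    HasSum (fun n : ℕ => z ^ n / n ! * ∫ x : ℝ, (x : ℂ) ^ n * g x ∂μ)
      (∫ x : ℝ, Complex.exp (z * x) * g x ∂μ) := by
  have hg_meas : AEStronglyMeasurable g μ := by
    simpa [Pi.smul_def', smul_smul, ← Real.exp_add, -Complex.real_smul] using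
      (by fun_prop : Continuous fun x : ℝ => Real.exp (-(r * |x|))).aestronglyMeasurable.smul hg.1
  have exp_series (x : ℝ) : HasSum (fun n : ℕ => (‖z‖ * |x|) ^ n / n ! * ‖g x‖)
      (Real.exp (‖z‖ * |x|) * ‖g x‖) := by
    rw [Real.exp_eq_exp_ℝ]
    exact (NormedSpace.expSeries_div_hasSum_exp (‖z‖ * |x|)).mul_right _
  have cexp_series (x : ℝ) : HasSum (fun n : ℕ => (z * x) ^ n / n ! * g x)
      (Complex.exp (z * x) * g x) := by
    rw [Complex.exp_eq_exp_ℂ]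
    exact (NormedSpace.expSeries_div_hasSum_exp (z * x)).mul_right _
  have bound_integrable : Integrable (fun x => Real.exp (‖z‖ * |x|) * ‖g x‖) μ := by
    refine hg.mono ((by fun_prop : Continuous _).aestronglyMeasurable.mul hg_meas.norm)
      (ae_of_all _ fun x => ?_)
    rw [norm_mul, norm_norm, norm_smul, Real.norm_eq_abs, Real.norm_eq_abs, Real.abs_exp,
      Real.abs_exp]
    gcongr
  have term_meas (n : ℕ) : AEStronglyMeasurable (fun x : ℝ => (z * x) ^ n / n ! * g x) μ :=
    (by fun_prop : Continuous _).aestronglyMeasurable.mul hg_meas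
  have integral_series := hasSum_integral_of_dominated_convergence
    (fun n x => (‖z‖ * |x|) ^ n / n ! * ‖g x‖) term_meas
    (fun n => ae_of_all μ fun x => by simp) (ae_of_all μ fun x => (exp_series x).summable)
    (by simpa only [(exp_series _).tsum_eq] using bound_integrable) (ae_of_all μ cexp_series)
  simpa only [mul_pow, mul_div_right_comm, mul_assoc, integral_const_mul]
    using integral_series

theorem integral_pow_mul_cexp_mul_eq_zero (hg : Integrable (fun x => Real.exp (r * |x|) • g x) μ)
    (hmom : ∀ n : ℕ, ∫ x : ℝ, (x : ℂ) ^ n * g x ∂μ = 0) {z : ℂ} (hz : ‖z‖ < r) (m : ℕ) :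
    ∫ x : ℝ, (x : ℂ) ^ m * (Complex.exp (z * x) * g x) ∂μ = 0 := by
  obtain ⟨s, hzs, hsr⟩ := exists_between hz
  have hpow : Integrable (fun x => Real.exp (s * |x|) • ((x : ℂ) ^ m * g x)) μ :=
    memLp_one_iff_integrable.1 <|
      memLp_exp_mul_abs_smul_pow_mul hsr (memLp_one_iff_integrable.2 hg) m
  have series := hasSum_integral_pow_mul hpow hzs.le
  simp only [← mul_assoc, ← pow_add] at series hmom ⊢
  simp only [hmom, mul_zero] at series
  simpa only [mul_comm] using series.unique hasSum_zero

theorem integral_pow_mul_cexp_mul_I_mul_eq_zero (hr : 0 < r)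
    (hg : Integrable (fun x => Real.exp (r * |x|) • g x) μ)
    (hmom : ∀ n : ℕ, ∫ x : ℝ, (x : ℂ) ^ n * g x ∂μ = 0) (t : ℝ) (n : ℕ) :
    ∫ x : ℝ, (x : ℂ) ^ n * (Complex.exp ((t * x : ℝ) * Complex.I) * g x) ∂μ = 0 := by
  obtain ⟨k, hk⟩ := exists_nat_gt (|t| / r)
  have hk_pos : (0 : ℝ) < k := (by positivity : 0 ≤ |t| / r).trans_lt hk
  have step_lt : ‖((t / k : ℝ) : ℂ) * Complex.I‖ < r := by
    rw [norm_mul, Complex.norm_I, mul_one, Complex.norm_real, Real.norm_eq_abs, abs_div,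
      Nat.abs_cast, div_lt_iff₀ hk_pos, mul_comm]
    exact (div_lt_iff₀ hr).1 hk
  have moments_eq_zero (j : ℕ) : ∀ m : ℕ, ∫ x : ℝ, (x : ℂ) ^ m *
      (Complex.exp ((j * (t / k) * x : ℝ) * Complex.I) * g x) ∂μ = 0 := by
    induction j with
    | zero => simpa using hmom
    | succ j ih =>
      intro m
      have modulated_integrable : Integrable (fun x : ℝ => Real.exp (r * |x|) •
          (Complex.exp ((j * (t / k) * x : ℝ) * Complex.I) * g x)) μ := by
        simp only [← mul_smul_comm]
        exact hg.bdd_mul (c := 1) (by fun_prop : Continuous _).aestronglyMeasurable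
          (ae_of_all _ fun x => (Complex.norm_exp_ofReal_mul_I _).le)
      rw [← integral_pow_mul_cexp_mul_eq_zero modulated_integrable ih step_lt m]
      congr with x
      rw [← mul_assoc (Complex.exp _) (Complex.exp _), ← Complex.exp_add]
      push_cast
      ring_nf
  simpa only [mul_div_cancel₀ t hk_pos.ne'] using moments_eq_zero k n

theorem ae_eq_zero_of_integral_pow_mul_eq_zero (hr : 0 < r)
    (hg : Integrable (fun x => Real.exp (r * |x|) • g x) μ)
    (hmom : ∀ n : ℕ, ∫ x : ℝ, (x : ℂ) ^ n * g x ∂μ = 0) : g =ᵐ[μ] 0 := by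
  have hg_integrable : Integrable g μ := by
    simpa using memLp_one_iff_integrable.1
      (memLp_pow_mul_of_exp_mul_abs_smul hr (memLp_one_iff_integrable.2 hg) 0)
  refine ae_eq_zero_of_integral_cexp_inner_mul_eq_zero hg_integrable fun t => ?_
  simpa using integral_pow_mul_cexp_mul_I_mul_eq_zero hr hg hmom t 0

end ExponentialMoments

section WeightedPolynomials

/-- The subspace of `L^p(μ)` formed by the products `P ω` of a complex polynomial `P` and the weight
`ω`. Only those `P` contribute for which `P ω` lies in `L^p(μ)`, so no integrability of `ω` is
built in. -/
def weightedPolynomials (ω : ℝ → ℂ) (p : ENNReal) (μ : Measure ℝ) : Submodule ℂ (Lp ℂ p μ) where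
  carrier := {f | ∃ P : Polynomial ℂ, (f : ℝ → ℂ) =ᵐ[μ] fun x : ℝ => P.eval (x : ℂ) * ω x}
  zero_mem' := ⟨0, by simpa using! Lp.coeFn_zero ℂ p μ⟩
  add_mem' := by
    rintro f g ⟨P, hP⟩ ⟨Q, hQ⟩
    refine ⟨P + Q, ?_⟩
    filter_upwards [Lp.coeFn_add f g, hP, hQ] with x hfg hf hg
    rw [hfg, Pi.add_apply, hf, hg, Polynomial.eval_add, add_mul]
  smul_mem' := by
    rintro c f ⟨P, hP⟩
    refine ⟨c • P, ?_⟩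
    filter_upwards [Lp.coeFn_smul c f, hP] with x hcf hf
    rw [hcf, Pi.smul_apply, hf, Polynomial.eval_smul, smul_mul_assoc]

variable {μ : Measure ℝ} {ω : ℝ → ℂ} {r : ℝ}

theorem toLp_pow_mul_mem_weightedPolynomials {p : ENNReal} {n : ℕ}
    (h : MemLp (fun x : ℝ => (x : ℂ) ^ n * ω x) p μ) : h.toLp _ ∈ weightedPolynomials ω p μ :=
  ⟨Polynomial.X ^ n, by simpa using h.coeFn_toLp⟩

theorem integral_pow_mul_conj_mul_eq_zero_of_mem_orthogonal {f : Lp ℂ 2 μ} {n : ℕ}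
    (hf : f ∈ (weightedPolynomials ω 2 μ)ᗮ) (h : MemLp (fun x : ℝ => (x : ℂ) ^ n * ω x) 2 μ) :
    ∫ x : ℝ, (x : ℂ) ^ n * (conj (ω x) * f x) ∂μ = 0 := by
  rw [← hf _ (toLp_pow_mul_mem_weightedPolynomials h), L2.inner_def]
  refine integral_congr_ae ?_
  filter_upwards [h.coeFn_toLp] with x hx
  rw [hx, RCLike.inner_apply', map_mul, map_pow, Complex.conj_ofReal, mul_assoc]

theorem orthogonal_weightedPolynomials_eq_bot (hr : 0 < r)
    (hω : MemLp (fun x => Real.exp (r * |x|) • ω x) 2 μ) (hω_ne : ∀ᵐ x ∂μ, ω x ≠ 0) :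
    (weightedPolynomials ω 2 μ)ᗮ = ⊥ := by
  refine (Submodule.eq_bot_iff _).2 fun f hf => ?_
  have product_integrable :
      Integrable (fun x => Real.exp (r * |x|) • (conj (ω x) * f x)) μ :=
    (hω.star.integrable_mul (Lp.memLp f)).congr <|
      ae_of_all _ fun x => by simp [-Complex.ofReal_exp, mul_assoc]
  have product_ae_eq_zero := ae_eq_zero_of_integral_pow_mul_eq_zero hr product_integrable fun n =>
    integral_pow_mul_conj_mul_eq_zero_of_mem_orthogonal hf
      (memLp_pow_mul_of_exp_mul_abs_smul hr hω n)
  rw [Lp.eq_zero_iff_ae_eq_zero]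
  filter_upwards [product_ae_eq_zero, hω_ne] with x hx hω_x
  exact (mul_eq_zero.1 hx).resolve_left ((map_ne_zero _).2 hω_x)

theorem polynomial_mul_gaussian_dense_in_L2_general (hr : 0 < r)
    (hω : MemLp (fun x => Real.exp (r * |x|) • ω x) 2 μ) (hω_ne : ∀ᵐ x ∂μ, ω x ≠ 0) :
    Dense {f : Lp ℂ 2 μ | ∃ P : Polynomial ℂ,
      (f : ℝ → ℂ) =ᵐ[μ] fun x : ℝ => P.eval (x : ℂ) * ω x} := by
  change Dense (weightedPolynomials ω 2 μ : Set (Lp ℂ 2 μ))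
  rw [Submodule.dense_iff_topologicalClosure_eq_top, Submodule.topologicalClosure_eq_top_iff]
  exact orthogonal_weightedPolynomials_eq_bot hr hω hω_ne

end WeightedPolynomials

theorem memLp_two_exp_mul_abs_smul_cexp_neg_mul_sq {b : ℂ} (hb : 0 < b.re) (r : ℝ) :
    MemLp (fun x : ℝ => Real.exp (r * |x|) • Complex.exp (-b * (x : ℂ) ^ 2)) 2 := by
  have hmeas : AEStronglyMeasurable
      (fun x : ℝ => Real.exp (r * |x|) • Complex.exp (-b * (x : ℂ) ^ 2)) :=
    (by fun_prop : Continuous _).aestronglyMeasurable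
  rw [memLp_two_iff_integrable_sq_norm hmeas]
  refine ((integrable_exp_neg_mul_sq hb).const_mul (Real.exp (r ^ 2 / b.re))).mono'
    (hmeas.norm.pow 2) (ae_of_all _ fun x => ?_)
  have complete_square : 2 * (r * |x| + -b.re * x ^ 2) ≤ r ^ 2 / b.re + -b.re * x ^ 2 := by
    have h : r ^ 2 / b.re + -b.re * x ^ 2 - 2 * (r * |x| + -b.re * x ^ 2) =
        (r - b.re * |x|) ^ 2 / b.re := by
      rw [← sq_abs x]
      field_simp
      ring
    exact sub_nonneg.1 (h ▸ by positivity)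
  rw [Real.norm_of_nonneg (by positivity), norm_smul, norm_cexp_neg_mul_sq, Real.norm_eq_abs,
    Real.abs_exp, ← Real.exp_add, ← Real.exp_add, ← Real.exp_nat_mul]
  exact Real.exp_le_exp.2 (mod_cast complete_square)

/-- The functions `x ↦ P(x)·exp(−x²/4)`, `P` a complex polynomial, form a
dense subset of L²(ℝ, ℂ) (Example 2). -/
theorem polynomial_mul_gaussian_dense_in_L2 :
    Dense {f : Lp ℂ 2 (volume : Measure ℝ) |
      ∃ P : Polynomial ℂ,
        (f : ℝ → ℂ) =ᵐ[volume]
          fun x : ℝ => P.eval (x : ℂ) * Complex.exp (-(x : ℂ) ^ 2 / 4)} := by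
  simpa [neg_mul, inv_mul_eq_div, neg_div] using polynomial_mul_gaussian_dense_in_L2_general one_pos
    (memLp_two_exp_mul_abs_smul_cexp_neg_mul_sq (b := 4⁻¹) (by norm_num) 1)
    (ae_of_all _ fun _ => Complex.exp_ne_zero _)
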